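/- arXiv:1812.08897 — 6 statements merged into one kernel-verified Lean document; each statement's English description precedes it below -/
import Mathlib

section
/- Let M be a left R-module such that the product ·_M on submodules is associative. Then the following are equivalent: (a) M is strongly harmonic; (b) for every pair of distinct maximal proper fully invariant submodules N, L of M there exist submodules N', L' of M (not necessarily fully invariant) with N' ⊄ N, L' ⊄ L and L'·_M N' = 0; (c) for every pair of distinct maximal proper fully invariant submodules N, L of M there exist elements a, b ∈ M with a ∉ N, b ∉ L and (Ra)·_M (Rb) = 0 (equivalently, a ∈ Ann_M(Rb)). -/
/-!
The product `A ·_M ⊤` is the fully invariant closure of `A`: it is fully invariant and contains `A`.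
If `L' ·_M N' = 0` for arbitrary submodules, then associativity and `⊤ ·_M N' ≤ N'` give
`(L' ·_M ⊤) ·_M (N' ·_M ⊤) = (L' ·_M (⊤ ·_M N')) ·_M ⊤ ≤ (L' ·_M N') ·_M ⊤ = 0`,
so `L'` and `N'` may be replaced by their fully invariant closures, which are even less contained
in `L` and `N`. Passing to cyclic submodules only uses monotonicity of the product: choose
elements witnessing the non-inclusions.
-/

open Submodule

variable {R : Type*} [Ring R] {M : Type*} [AddCommGroup M] [Module R M]

/-- The product `N ·_M L = Σ { f(N) : f ∈ Hom_R(M, L) }` of submodules of `M`. -/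
def SmProd (N L : Submodule R M) : Submodule R M :=
  ⨆ f : M →ₗ[R] L, N.map (L.subtype ∘ₗ f)

/-- A submodule is fully invariant if it is stable under every endomorphism of `M`. -/
def IsFI (N : Submodule R M) : Prop :=
  ∀ f : M →ₗ[R] M, N.map f ≤ N

/-- `N` is a maximal proper fully invariant submodule of `M`
(a coatom of the lattice of fully invariant submodules). -/
def IsMaxFI (N : Submodule R M) : Prop :=
  IsFI N ∧ N ≠ ⊤ ∧ ∀ L : Submodule R M, IsFI L → N < L → L = ⊤

/-- `M` is strongly harmonic if for every pair of distinct maximal proper fully invariant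
submodules `N, L` there are fully invariant `N', L'` with `N' ⊄ N`, `L' ⊄ L`, `L' ·_M N' = 0`. -/
def StronglyHarmonic (R M : Type*) [Ring R] [AddCommGroup M] [Module R M] : Prop :=
  ∀ N L : Submodule R M, IsMaxFI N → IsMaxFI L → N ≠ L →
    ∃ N' L' : Submodule R M, IsFI N' ∧ IsFI L' ∧ ¬ N' ≤ N ∧ ¬ L' ≤ L ∧ SmProd L' N' = ⊥

/-- `Ann_M(K) = Σ { L ≤ M : L ·_M K = 0 }`. -/
def AnnM (K : Submodule R M) : Submodule R M :=
  sSup {L : Submodule R M | SmProd L K = ⊥}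

/-- `Ler(N) = Σ { K fully invariant : N + Ann_M(K) = M }`. -/
def Ler (N : Submodule R M) : Submodule R M :=
  sSup {K : Submodule R M | IsFI K ∧ N ⊔ AnnM K = ⊤}

/-- `M` is quasi-projective. -/
def QuasiProjective (R M : Type*) [Ring R] [AddCommGroup M] [Module R M] : Prop :=
  ∀ (K : Submodule R M) (h : M →ₗ[R] M ⧸ K), ∃ g : M →ₗ[R] M, K.mkQ ∘ₗ g = h

/-- The lattice `Λ^{fi}(M)` of fully invariant submodules is compact. -/
def FICompact (R M : Type*) [Ring R] [AddCommGroup M] [Module R M] : Prop :=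
  ∀ S : Set (Submodule R M), (∀ N ∈ S, IsFI N) → sSup S = ⊤ →
    ∃ F : Finset (Submodule R M), ↑F ⊆ S ∧ sSup (F : Set (Submodule R M)) = ⊤

/-- The lattice `Λ^{fi}(M)` is normal. -/
def FINormal (R M : Type*) [Ring R] [AddCommGroup M] [Module R M] : Prop :=
  ∀ N L : Submodule R M, IsFI N → IsFI L → N ⊔ L = ⊤ →
    ∃ N' L' : Submodule R M, IsFI N' ∧ IsFI L' ∧
      N ⊔ L' = ⊤ ∧ N' ⊔ L = ⊤ ∧ SmProd N' L' = ⊥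

/-- Gelfand module. -/
def Gelfand (R M : Type*) [Ring R] [AddCommGroup M] [Module R M] : Prop :=
  ∀ N L : Submodule R M, IsCoatom N → IsCoatom L → N ≠ L →
    ∃ N' L' : Submodule R M, IsFI N' ∧ IsFI L' ∧ ¬ N' ≤ N ∧ ¬ L' ≤ L ∧ SmProd L' N' = ⊥

/-- The hull-kernel topology on `mx^{fi}(M)`, generated by the sets
`m(K) = {𝓜 : K ⊄ 𝓜}` for `K` fully invariant. -/
def mxfiTop (R M : Type*) [Ring R] [AddCommGroup M] [Module R M] :
    TopologicalSpace {N : Submodule R M // IsMaxFI N} :=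
  TopologicalSpace.generateFrom
    {U | ∃ K : Submodule R M, IsFI K ∧ U = {𝓜 : {N : Submodule R M // IsMaxFI N} | ¬ K ≤ 𝓜.1}}

/-- The frame `Ψ(M)`. -/
def PsiSet (R M : Type*) [Ring R] [AddCommGroup M] [Module R M] : Set (Submodule R M) :=
  {N | IsFI N ∧ ∀ n ∈ N, N ⊔ AnnM (Submodule.span R {n}) = ⊤}

/-- The points (`∧`-irreducible elements) of `Ψ(M)`. -/
def PsiPt (R M : Type*) [Ring R] [AddCommGroup M] [Module R M] : Set (Submodule R M) :=
  {p | p ∈ PsiSet R M ∧ p ≠ ⊤ ∧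
    ∀ N ∈ PsiSet R M, ∀ L ∈ PsiSet R M, N ⊓ L ≤ p → N ≤ p ∨ L ≤ p}

/-- The topology on the point space of `Ψ(M)`, with opens generated by
`U(N) = {p : N ⊄ p}` for `N ∈ Ψ(M)`. -/
def psiPtTop (R M : Type*) [Ring R] [AddCommGroup M] [Module R M] :
    TopologicalSpace (PsiPt R M) :=
  TopologicalSpace.generateFrom
    {U | ∃ N ∈ PsiSet R M, U = {p : PsiPt R M | ¬ N ≤ p.1}}

theorem smProd_le_iff {A B C : Submodule R M} :
    SmProd A B ≤ C ↔ ∀ f : M →ₗ[R] B, ∀ x ∈ A, (f x : M) ∈ C := by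
  simp only [SmProd, iSup_le_iff, Submodule.map_le_iff_le_comap]
  rfl

theorem mem_smProd {A B : Submodule R M} (f : M →ₗ[R] B) {x : M} (hx : x ∈ A) :
    (f x : M) ∈ SmProd A B :=
  smProd_le_iff.1 le_rfl f x hx

theorem smProd_mono {A A' B B' : Submodule R M} (hA : A ≤ A') (hB : B ≤ B') :
    SmProd A B ≤ SmProd A' B' :=
  smProd_le_iff.2 fun f _ hx => mem_smProd (Submodule.inclusion hB ∘ₗ f) (hA hx)

theorem smProd_le_right (A B : Submodule R M) : SmProd A B ≤ B :=
  smProd_le_iff.2 fun f x _ => (f x).2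

theorem bot_smProd (B : Submodule R M) : SmProd ⊥ B = ⊥ := by
  refine eq_bot_iff.2 (smProd_le_iff.2 fun f x hx => ?_)
  rw [(Submodule.mem_bot R).1 hx]
  simp

theorem le_smProd_top (A : Submodule R M) : A ≤ SmProd A ⊤ := fun _ hx =>
  mem_smProd (LinearMap.codRestrict ⊤ LinearMap.id fun _ => Submodule.mem_top) hx

theorem isFI_smProd_top (A : Submodule R M) : IsFI (SmProd A ⊤) := by
  intro g
  rw [Submodule.map_le_iff_le_comap]
  exact smProd_le_iff.2 fun f _ hx =>
    mem_smProd (LinearMap.codRestrict ⊤ (g ∘ₗ (⊤ : Submodule R M).subtype ∘ₗ f)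
      fun _ => Submodule.mem_top) hx

/-- Under associativity, a vanishing product stays zero after passing to fully invariant
closures. -/
theorem smProd_closure_eq_bot
    (hassoc : ∀ A B C : Submodule R M, SmProd (SmProd A B) C = SmProd A (SmProd B C))
    {A B : Submodule R M} (h : SmProd A B = ⊥) : SmProd (SmProd A ⊤) (SmProd B ⊤) = ⊥ := by
  rw [hassoc, ← hassoc ⊤, ← hassoc, eq_bot_iff, ← bot_smProd (⊤ : Submodule R M), ← h]
  exact smProd_mono (smProd_mono le_rfl (smProd_le_right ⊤ B)) le_rfl

/-- If the product `·_M` on submodules is associative, then the following are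
equivalent: (a) `M` is strongly harmonic; (b) for distinct `N, L ∈ mx^{fi}(M)` there are
submodules `N', L'` (not necessarily fully invariant) with `N' ⊄ N`, `L' ⊄ L`, `L' ·_M N' = 0`;
(c) for distinct `N, L ∈ mx^{fi}(M)` there are `a ∉ N`, `b ∉ L` with `(Ra) ·_M (Rb) = 0`. -/
theorem stronglyHarmonic_tfae
    (hassoc : ∀ A B C : Submodule R M, SmProd (SmProd A B) C = SmProd A (SmProd B C)) :
    (StronglyHarmonic R M ↔
      ∀ N L : Submodule R M, IsMaxFI N → IsMaxFI L → N ≠ L →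
        ∃ N' L' : Submodule R M, ¬ N' ≤ N ∧ ¬ L' ≤ L ∧ SmProd L' N' = ⊥) ∧
    (StronglyHarmonic R M ↔
      ∀ N L : Submodule R M, IsMaxFI N → IsMaxFI L → N ≠ L →
        ∃ a b : M, a ∉ N ∧ b ∉ L ∧
          SmProd (Submodule.span R {a}) (Submodule.span R {b}) = ⊥) := by
  have hab : StronglyHarmonic R M ↔
      ∀ N L : Submodule R M, IsMaxFI N → IsMaxFI L → N ≠ L →
        ∃ N' L' : Submodule R M, ¬ N' ≤ N ∧ ¬ L' ≤ L ∧ SmProd L' N' = ⊥ := by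
    constructor
    · intro h N L hN hL hne
      obtain ⟨N', L', -, -, h1, h2, h3⟩ := h N L hN hL hne
      exact ⟨N', L', h1, h2, h3⟩
    · intro h N L hN hL hne
      obtain ⟨N', L', h1, h2, h3⟩ := h N L hN hL hne
      exact ⟨SmProd N' ⊤, SmProd L' ⊤, isFI_smProd_top N', isFI_smProd_top L',
        fun hle => h1 ((le_smProd_top N').trans hle),
        fun hle => h2 ((le_smProd_top L').trans hle), smProd_closure_eq_bot hassoc h3⟩
  refine ⟨hab, hab.trans ?_⟩
  -- The left factor avoids `L` in (b) but `N` in (c), so each direction swaps the pair.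
  constructor
  · intro h N L hN hL hne
    obtain ⟨N', L', h1, h2, h3⟩ := h L N hL hN hne.symm
    obtain ⟨a, ha, haN⟩ := SetLike.not_le_iff_exists.1 h2
    obtain ⟨b, hb, hbL⟩ := SetLike.not_le_iff_exists.1 h1
    refine ⟨a, b, haN, hbL, eq_bot_iff.2 (h3 ▸ smProd_mono ?_ ?_)⟩
    · exact (Submodule.span_singleton_le_iff_mem a L').2 ha
    · exact (Submodule.span_singleton_le_iff_mem b N').2 hb
  · intro h N L hN hL hne
    obtain ⟨a, b, ha, hb, hprod⟩ := h L N hL hN hne.symm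
    exact ⟨Submodule.span R {b}, Submodule.span R {a},
      fun hle => hb ((Submodule.span_singleton_le_iff_mem b N).1 hle),
      fun hle => ha ((Submodule.span_singleton_le_iff_mem a L).1 hle), hprod⟩
end

section
/- Let M be a quasi-projective left R-module and N a fully invariant submodule of M. Then N is a maximal proper fully invariant submodule of M (a coatom of the lattice of fully invariant submodules) if and only if the quotient module M/N is FI-simple. -/
/-!
Pulling back and pushing forward along the projection `M → M ⧸ N` matches the fully invariant
submodules of `M` above `N` with the fully invariant submodules of `M ⧸ N`. Pullbacks stay fully
invariant because every endomorphism of `M` descends to `M ⧸ N` (`N` being fully invariant);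
images stay fully invariant because every endomorphism of `M ⧸ N` lifts to `M`
(`M` being quasi-projective).
-/

open Submodule

variable {R : Type*} [Ring R] {M : Type*} [AddCommGroup M] [Module R M]

theorem IsFI.comap_mkQ {N : Submodule R M} (hN : IsFI N) {L : Submodule R (M ⧸ N)}
    (hL : IsFI L) : IsFI (L.comap N.mkQ) := by
  intro f
  rw [Submodule.map_le_iff_le_comap]
  intro x hx
  exact hL (N.mapQ N f (Submodule.map_le_iff_le_comap.mp (hN f))) ⟨N.mkQ x, hx, rfl⟩

theorem IsFI.map_mkQ (hqp : QuasiProjective R M) (N : Submodule R M) {L : Submodule R M}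
    (hL : IsFI L) : IsFI (L.map N.mkQ) := by
  intro g
  obtain ⟨f, hf⟩ := hqp N (g ∘ₗ N.mkQ)
  rw [← Submodule.map_comp, ← hf, Submodule.map_comp]
  exact Submodule.map_mono (hL f)

/-- For a quasi-projective module `M` and a fully invariant submodule `N`,
`N` is a maximal proper fully invariant submodule iff `M/N` is FI-simple. -/
theorem isMaxFI_iff_fiSimple_quotient
    (hqp : QuasiProjective R M) (N : Submodule R M) (hN : IsFI N) :
    IsMaxFI N ↔
      (Nontrivial (M ⧸ N) ∧
        ∀ L : Submodule R (M ⧸ N), IsFI L → L = ⊥ ∨ L = ⊤) := by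
  rw [Submodule.Quotient.nontrivial_iff]
  constructor
  · rintro ⟨-, hne, hmax⟩
    refine ⟨hne, fun L hL => ?_⟩
    have hmap : (L.comap N.mkQ).map N.mkQ = L :=
      Submodule.map_comap_eq_of_surjective N.mkQ_surjective L
    rcases (Submodule.le_comap_mkQ N L).eq_or_lt with h | h
    · left
      rw [← hmap, ← h, Submodule.mkQ_map_self]
    · right
      rw [← hmap, hmax _ (hN.comap_mkQ hL) h, Submodule.map_top, Submodule.range_mkQ]
  · rintro ⟨hne, hs⟩
    refine ⟨hN, hne, fun L hL hlt => ?_⟩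
    have hcomap : (L.map N.mkQ).comap N.mkQ = L := by
      rw [Submodule.comap_map_mkQ, sup_eq_right.mpr hlt.le]
    rcases hs _ (hL.map_mkQ hqp N) with h | h
    · rw [h, Submodule.comap_bot, Submodule.ker_mkQ] at hcomap
      exact absurd hcomap hlt.ne
    · rw [← hcomap, h, Submodule.comap_top]
end

section
/- Let M be a quasi-projective strongly harmonic left R-module. Then for every index set I, the direct sum M^(I) = ⨁_{i∈I} M is a strongly harmonic module. -/
/-!
For nonempty `I`, the maps `N ↦ N^(I)` (families with all coordinates in `N`) and
`K ↦ {m | single i₀ m ∈ K}` (independent of the chosen index `i₀`) are mutually inverse order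
isomorphisms between the fully invariant submodules of `M` and those of `M^(I)`: the matrix units
`lsingle i ∘ lapply j` are endomorphisms of `M^(I)`, so a fully invariant `K` is determined
coordinatewise by a single submodule of `M`. Hence maximal fully invariant submodules correspond.
The isomorphism also preserves vanishing of products, because the matrix entries of a map
`M^(I) → N^(I)` are maps `M → N`. So separating pairs for `M` give separating pairs for `M^(I)`.
For empty `I` the module `M^(I)` is zero and has no proper submodules.
-/

open Submodule

variable {R : Type*} [Ring R] {M : Type*} [AddCommGroup M] [Module R M]

/-- The submodule `N^(I)` of `M^(I)`: the finitely supported families with all coordinates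
in `N`. -/
noncomputable def finsuppPow (I : Type*) (N : Submodule R M) : Submodule R (I →₀ M) :=
  ⨅ i, N.comap (Finsupp.lapply i)

theorem mem_finsuppPow {I : Type*} {N : Submodule R M} {x : I →₀ M} :
    x ∈ finsuppPow I N ↔ ∀ i, x i ∈ N := by
  simp [finsuppPow]

theorem single_mem_finsuppPow {I : Type*} {N : Submodule R M} {i : I} {m : M} :
    Finsupp.single i m ∈ finsuppPow I N ↔ m ∈ N := by
  classical
  rw [mem_finsuppPow]
  refine ⟨fun h => by simpa using h i, fun h j => ?_⟩
  rw [Finsupp.single_apply]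
  split_ifs
  exacts [h, N.zero_mem]

theorem comap_finsuppPow {I : Type*} (N : Submodule R M) (i : I) :
    (finsuppPow I N).comap (Finsupp.lsingle i) = N := by
  ext m
  simp [single_mem_finsuppPow]

theorem IsFI.apply_mem {N : Submodule R M} (h : IsFI N) (f : M →ₗ[R] M) {x : M} (hx : x ∈ N) :
    f x ∈ N :=
  h f (mem_map_of_mem hx)

theorem IsFI.finsuppPow {N : Submodule R M} (h : IsFI N) (I : Type*) :
    IsFI (finsuppPow I N) := by
  rintro f _ ⟨x, hx, rfl⟩
  have hx' := mem_finsuppPow.1 hx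
  refine mem_finsuppPow.2 fun j => ?_
  rw [← Finsupp.sum_single x, Finsupp.sum, map_sum, Finsupp.finsetSum_apply]
  exact N.sum_mem fun i _ =>
    h.apply_mem (Finsupp.lapply j ∘ₗ f ∘ₗ Finsupp.lsingle i) (hx' i)

theorem IsFI.comap_lsingle {I : Type*} {K : Submodule R (I →₀ M)} (h : IsFI K) (i : I) :
    IsFI (K.comap (Finsupp.lsingle i : M →ₗ[R] I →₀ M)) := by
  rintro f _ ⟨m, hm, rfl⟩
  simpa using h.apply_mem (Finsupp.lsingle i ∘ₗ f ∘ₗ Finsupp.lapply i) hm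

/-- A fully invariant submodule of `M^(I)` is determined by any one of its coordinate
submodules. -/
theorem IsFI.finsuppPow_comap {I : Type*} {K : Submodule R (I →₀ M)} (h : IsFI K) (i₀ : I) :
    _root_.finsuppPow I (K.comap (Finsupp.lsingle i₀)) = K := by
  ext x
  rw [mem_finsuppPow]
  refine ⟨fun hx => ?_, fun hx i =>
    h.apply_mem (Finsupp.lsingle i₀ ∘ₗ Finsupp.lapply i) hx⟩
  rw [← Finsupp.sum_single x]
  refine K.sum_mem fun i _ => ?_
  simpa using h.apply_mem (Finsupp.lsingle i ∘ₗ Finsupp.lapply i₀) (hx i)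

theorem IsMaxFI.comap_lsingle {I : Type*} {K : Submodule R (I →₀ M)} (h : IsMaxFI K) (i : I) :
    IsMaxFI (K.comap (Finsupp.lsingle i : M →ₗ[R] I →₀ M)) := by
  obtain ⟨hK, hne, hmax⟩ := h
  refine ⟨hK.comap_lsingle i, fun htop => hne ?_, fun L hL hlt => ?_⟩
  · rw [← hK.finsuppPow_comap i, htop, eq_top_iff]
    exact fun x _ => mem_finsuppPow.2 fun _ => mem_top
  · have hle : K ≤ finsuppPow I L := by
      intro x hx
      rw [← hK.finsuppPow_comap i] at hx
      exact mem_finsuppPow.2 fun j => hlt.le (mem_finsuppPow.1 hx j)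
    have hne' : K ≠ finsuppPow I L := fun he =>
      hlt.ne (by rw [he, comap_finsuppPow])
    rw [← comap_finsuppPow L i, hmax _ (hL.finsuppPow I) (lt_of_le_of_ne hle hne'), comap_top]

theorem smProd_eq_bot_iff {N L : Submodule R M} :
    SmProd N L = ⊥ ↔ ∀ f : M →ₗ[R] L, ∀ x ∈ N, f x = 0 := by
  rw [SmProd, iSup_eq_bot]
  simp only [eq_bot_iff, map_le_iff_le_comap]
  refine forall_congr' fun f => ⟨fun h x hx => ?_, fun h x hx => ?_⟩
  · simpa using h hx
  · simp [h x hx]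

theorem smProd_finsuppPow_eq_bot {N L : Submodule R M} (h : SmProd N L = ⊥) (I : Type*) :
    SmProd (finsuppPow I N) (finsuppPow I L) = ⊥ := by
  rw [smProd_eq_bot_iff] at h ⊢
  intro f x hx
  have hx' := mem_finsuppPow.1 hx
  rw [← Finsupp.sum_single x, Finsupp.sum, map_sum]
  refine Finset.sum_eq_zero fun i _ => ?_
  ext j
  -- The `(j, i)` matrix entry of `f`, as a map `M → L`.
  let g : M →ₗ[R] L :=
    ((Finsupp.lapply j ∘ₗ (finsuppPow I L).subtype ∘ₗ f ∘ₗ Finsupp.lsingle i).codRestrict L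
      fun m => mem_finsuppPow.1 (f (Finsupp.single i m)).2 j)
  exact congrArg Subtype.val (h g (x i) (hx' i))

/-- A direct sum of copies of a quasi-projective strongly harmonic module
is strongly harmonic. -/
theorem stronglyHarmonic_directSum
    (hqp : QuasiProjective R M) (hsh : StronglyHarmonic R M) (I : Type*) :
    StronglyHarmonic R (I →₀ M) := by
  intro K₁ K₂ h₁ h₂ hne
  obtain _ | ⟨⟨i⟩⟩ := isEmpty_or_nonempty I
  · exact absurd (Subsingleton.elim K₁ K₂) hne
  obtain ⟨N', L', hN', hL', hN, hL, hprod⟩ :=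
    hsh _ _ (h₁.comap_lsingle i) (h₂.comap_lsingle i) fun he => hne <| by
      rw [← h₁.1.finsuppPow_comap i, he, h₂.1.finsuppPow_comap i]
  refine ⟨finsuppPow I N', finsuppPow I L', hN'.finsuppPow I, hL'.finsuppPow I,
    fun hle => hN ?_, fun hle => hL ?_, smProd_finsuppPow_eq_bot hprod I⟩
  · exact fun m hm => hle (single_mem_finsuppPow.2 hm)
  · exact fun m hm => hle (single_mem_finsuppPow.2 hm)
end

section
/- Let M be a projective left R-module. Then every maximal element 𝓜 of the lattice of proper fully invariant submodules of M is a prime submodule: for all fully invariant submodules N, L of M, if N·_M L ≤ 𝓜 then N ≤ 𝓜 or L ≤ 𝓜. -/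
/-!
If `L` is not contained in `𝓜`, then maximality gives `L + 𝓜 = M`, because a sum of fully
invariant submodules is fully invariant. So the addition map `L × 𝓜 → M` is surjective, and
projectivity of `M` provides a section `x ↦ (g₁ x, g₂ x)`. For `x ∈ N` this writes
`x = g₁ x + g₂ x` with `g₁ x ∈ N ·_M L ≤ 𝓜` and `g₂ x ∈ 𝓜`, whence `N ≤ 𝓜`.
-/

open Submodule

variable {R : Type*} [Ring R] {M : Type*} [AddCommGroup M] [Module R M]

theorem IsFI.sup {N L : Submodule R M} (hN : IsFI N) (hL : IsFI L) : IsFI (N ⊔ L) := by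
  intro f
  rw [Submodule.map_sup]
  exact sup_le_sup (hN f) (hL f)

theorem apply_mem_SmProd {N L : Submodule R M} (f : M →ₗ[R] L) {x : M} (hx : x ∈ N) :
    (f x : M) ∈ SmProd N L :=
  le_iSup (fun f : M →ₗ[R] L => N.map (L.subtype ∘ₗ f)) f (Submodule.mem_map_of_mem hx)

/-- If `M` is projective, then `L + K = M` implies `N ≤ N ·_M L + K` for every `N`. -/
theorem le_SmProd_sup (hproj : Module.Projective R M) {L K : Submodule R M} (h : L ⊔ K = ⊤)
    (N : Submodule R M) : N ≤ SmProd N L ⊔ K := by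
  have hsurj : Function.Surjective (L.subtype.coprod K.subtype) := by
    rw [← LinearMap.range_eq_top, LinearMap.range_coprod, Submodule.range_subtype,
      Submodule.range_subtype, h]
  obtain ⟨g, hg⟩ := Module.projective_lifting_property _ LinearMap.id hsurj
  intro x hx
  have hgx : ((g x).1 : M) + (g x).2 = x := LinearMap.congr_fun hg x
  rw [← hgx]
  exact Submodule.add_mem_sup (apply_mem_SmProd (LinearMap.fst R L K ∘ₗ g) hx) (g x).2.2

/-- If `M` is projective, then every maximal proper fully invariant submodule
is prime: `N ·_M L ≤ 𝓜` with `N, L` fully invariant implies `N ≤ 𝓜` or `L ≤ 𝓜`. -/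
theorem isMaxFI_prime (hproj : Module.Projective R M)
    (𝓜 : Submodule R M) (h𝓜 : IsMaxFI 𝓜) :
    ∀ N L : Submodule R M, IsFI N → IsFI L → SmProd N L ≤ 𝓜 → N ≤ 𝓜 ∨ L ≤ 𝓜 := by
  intro N L _ hL hNL
  refine or_iff_not_imp_right.2 fun hL𝓜 => ?_
  have htop : L ⊔ 𝓜 = ⊤ := h𝓜.2.2 _ (hL.sup h𝓜.1) (right_lt_sup.2 hL𝓜)
  exact (le_SmProd_sup hproj htop N).trans (sup_le hNL le_rfl)
end

section
/- Let M be a projective left R-module. Then the lattice Λ^{fi}(M) of fully invariant submodules is compact (whenever M is a sum of a family of fully invariant submodules, it is a sum of a finite subfamily) if and only if the space mx^fi(M) with the hull-kernel topology is compact and Λ^{fi}(M) is coatomic (every proper fully invariant submodule is contained in a maximal proper fully invariant submodule). -/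
/-!
The three conditions are linked by one dictionary entry: for a family `S` of fully invariant
submodules, the sets `m(K)`, `K ∈ S`, cover `mx^fi(M)` exactly when no maximal fully invariant
submodule contains `Σ S`. If `Λ^fi(M)` is coatomic this happens exactly when `Σ S = M`
(`sSup_eq_top_iff_cover`), so open covers by the `m(K)` and finite subcovers correspond to
families with sum `M` and finite subfamilies with sum `M`. Alexander's subbasis theorem
(`compactSpace_generateFrom`) allows only covers by the `m(K)` to be considered.

That compactness of the lattice implies coatomicity is Zorn's lemma: if the sum of a nonempty chain
of proper fully invariant submodules were `M`, finitely many members, hence a single one, would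
already be `M` (`FICompact.exists_isMaxFI_ge`).
-/

open Submodule

variable {R : Type*} [Ring R] {M : Type*} [AddCommGroup M] [Module R M]

theorem isFI_sSup {S : Set (Submodule R M)} (hS : ∀ N ∈ S, IsFI N) : IsFI (sSup S) := by
  intro f
  rw [Submodule.map_le_iff_le_comap]
  refine sSup_le fun N hN => ?_
  rw [← Submodule.map_le_iff_le_comap]
  exact (hS N hN f).trans (le_sSup hN)

/-- A compact lattice of fully invariant submodules is coatomic. -/
theorem FICompact.exists_isMaxFI_ge (h : FICompact R M) {N : Submodule R M} (hN : IsFI N)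
    (hN' : N ≠ ⊤) : ∃ P : Submodule R M, IsMaxFI P ∧ N ≤ P := by
  obtain ⟨P, hNP, hP⟩ := zorn_le_nonempty₀ {L : Submodule R M | IsFI L ∧ L ≠ ⊤}
    (fun c hcs hc y hy => by
      refine ⟨sSup c, ⟨isFI_sSup fun L hL => (hcs hL).1, fun htop => ?_⟩,
        fun z hz => le_sSup hz⟩
      obtain ⟨F, hFc, hF⟩ := h c (fun L hL => (hcs hL).1) htop
      rcases F.eq_empty_or_nonempty with rfl | hne
      · -- An empty subfamily with sum `M` forces `M = 0`, so that even `y` is not proper.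
        have hbot : (⊥ : Submodule R M) = ⊤ := by simpa using hF
        exact (hcs hy).2 (top_le_iff.1 (hbot ▸ bot_le))
      · -- In a chain, a maximal element of `F` is the largest one, hence equal to the sum of `F`.
        obtain ⟨u, hu⟩ := F.exists_maximal hne
        refine (hcs (hFc hu.1)).2 (top_le_iff.1 (hF ▸ sSup_le fun z hz => ?_))
        rcases hc.total (hFc hz) (hFc hu.1) with hzu | huz
        · exact hzu
        · exact hu.2 hz huz) N ⟨hN, hN'⟩
  refine ⟨P, ⟨hP.1.1, hP.1.2, fun L hL hPL => ?_⟩, hNP⟩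
  by_contra hLtop
  exact hPL.not_ge (hP.2 ⟨hL, hLtop⟩ hPL.le)

/-- When `Λ^fi(M)` is coatomic, a family of fully invariant submodules has sum `M` iff the
corresponding sets `m(K)` cover `mx^fi(M)`. -/
theorem sSup_eq_top_iff_cover
    (hco : ∀ N : Submodule R M, IsFI N → N ≠ ⊤ → ∃ P : Submodule R M, IsMaxFI P ∧ N ≤ P)
    {S : Set (Submodule R M)} (hS : ∀ N ∈ S, IsFI N) :
    sSup S = ⊤ ↔ ∀ P : {N : Submodule R M // IsMaxFI N}, ∃ K ∈ S, ¬ K ≤ P.1 := by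
  constructor
  · intro h P
    by_contra! hP
    exact P.2.2.1 (top_le_iff.1 (h ▸ sSup_le hP))
  · intro h
    by_contra hne
    obtain ⟨P, hP, hle⟩ := hco _ (isFI_sSup hS) hne
    obtain ⟨K, hK, hKP⟩ := h ⟨P, hP⟩
    exact hKP ((le_sSup hK).trans hle)

/-- For `M` projective, the lattice `Λ^{fi}(M)` is compact iff the space
`mx^{fi}(M)` (hull-kernel topology) is compact and `Λ^{fi}(M)` is coatomic. -/
theorem fiCompact_iff_compactSpace_and_coatomic (hproj : Module.Projective R M) :
    FICompact R M ↔
      (@CompactSpace {N : Submodule R M // IsMaxFI N} (mxfiTop R M) ∧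
        ∀ N : Submodule R M, IsFI N → N ≠ ⊤ →
          ∃ 𝓜 : Submodule R M, IsMaxFI 𝓜 ∧ N ≤ 𝓜) := by
  constructor
  · intro h
    have hco : ∀ N : Submodule R M, IsFI N → N ≠ ⊤ → ∃ 𝓜 : Submodule R M, IsMaxFI 𝓜 ∧ N ≤ 𝓜 :=
      fun N hN hN' => h.exists_isMaxFI_ge hN hN'
    refine ⟨@compactSpace_generateFrom _ (mxfiTop R M) _ rfl fun P hP hcov => ?_, hco⟩
    let m : Submodule R M → Set {N : Submodule R M // IsMaxFI N} := fun K => {𝓜 | ¬ K ≤ 𝓜.1}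
    let S : Set (Submodule R M) := {K | IsFI K ∧ m K ∈ P}
    have hS : ∀ N ∈ S, IsFI N := fun N hN => hN.1
    obtain ⟨F, hFS, hF⟩ := h S hS ((sSup_eq_top_iff_cover hco hS).2 fun 𝓜 => by
      obtain ⟨U, hU, hMU⟩ : 𝓜 ∈ ⋃₀ P := hcov ▸ Set.mem_univ 𝓜
      obtain ⟨K, hK, rfl⟩ := hP hU
      exact ⟨K, ⟨hK, hU⟩, hMU⟩)
    refine ⟨m '' F, ?_, F.finite_toSet.image m, Set.eq_univ_of_forall fun 𝓜 => ?_⟩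
    · rintro _ ⟨K, hK, rfl⟩
      exact (hFS hK).2
    · obtain ⟨K, hK, hKM⟩ :=
        (sSup_eq_top_iff_cover hco fun N hN => (hFS hN).1).1 hF 𝓜
      exact ⟨m K, ⟨K, hK, rfl⟩, hKM⟩
  · rintro ⟨hcomp, hco⟩ S hS htop
    have hcov := (sSup_eq_top_iff_cover hco hS).1 htop
    obtain ⟨t, ht⟩ := @IsCompact.elim_finite_subcover _ (mxfiTop R M) _ _ hcomp.1
      (fun K : S => {𝓜 : {N : Submodule R M // IsMaxFI N} | ¬ K.1 ≤ 𝓜.1})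
      (fun K => TopologicalSpace.isOpen_generateFrom_of_mem ⟨K.1, hS K.1 K.2, rfl⟩)
      (fun 𝓜 _ => by
        obtain ⟨K, hK, hKM⟩ := hcov 𝓜
        exact Set.mem_iUnion.2 ⟨⟨K, hK⟩, hKM⟩)
    have hsub : ((t.map (Function.Embedding.subtype _) : Finset (Submodule R M)) :
        Set (Submodule R M)) ⊆ S := by
      intro K hK
      obtain ⟨K', -, rfl⟩ := Finset.mem_map.1 (Finset.mem_coe.1 hK)
      exact K'.2
    refine ⟨t.map (Function.Embedding.subtype _), hsub,
      (sSup_eq_top_iff_cover hco fun N hN => hS N (hsub hN)).2 fun 𝓜 => ?_⟩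
    obtain ⟨K, hK, hKM⟩ := Set.mem_iUnion₂.1 (ht (Set.mem_univ 𝓜))
    exact ⟨K.1, Finset.mem_coe.2 (Finset.mem_map.2 ⟨K, hK, rfl⟩), hKM⟩
end

section
/- For any associative ring R with identity, the lattice of two-sided ideals of R is normal if and only if R is a strongly harmonic ring. -/
/-!
From normality to strong harmonicity: distinct maximal ideals are comaximal, and the pair supplied
by normality separates them.

For the converse let `I + J = R`. Comaximality with a fixed ideal `K` is stable under finite
intersections (`sup_inf_eq_top`), so the elements annihilated on the right by some two-sided ideal
comaximal with `K` form a two-sided ideal (`leftLocal K`), and likewise on the other side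
(`rightLocal K`). For a maximal `M ⊇ I`, strong harmonicity says that `leftLocal M` lies in no
maximal ideal containing `J`, so `leftLocal M + J = R`. Hence some `b ∈ 1 + J` kills an ideal
`A ⊄ M`, which gives `A ≤ rightLocal J`. So `rightLocal J` lies in no maximal ideal containing `I`,
and `rightLocal J + I = R`. Writing `1 = a + i` accordingly yields an ideal `B` with `B + J = R` and
`B a = 0`; then `B` and its right annihilator are the ideals required by normality. Compactness of
`R` enters only through decompositions of `1`.
-/

variable {R : Type*} [Ring R]

/-- A left ideal (submodule of `R` over itself) is a two-sided ideal if it is closed under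
right multiplication. -/
def IsTwoSidedI (I : Submodule R R) : Prop :=
  ∀ a ∈ I, ∀ r : R, a * r ∈ I

/-- The product `IJ` of two (two-sided) ideals: the left ideal generated by the products
`a * b` with `a ∈ I`, `b ∈ J`. -/
def IProd (I J : Submodule R R) : Submodule R R :=
  Submodule.span R {x : R | ∃ a ∈ I, ∃ b ∈ J, x = a * b}

/-- Maximal proper two-sided ideal. -/
def IsMaxTS (I : Submodule R R) : Prop :=
  IsTwoSidedI I ∧ I ≠ ⊤ ∧ ∀ J : Submodule R R, IsTwoSidedI J → I < J → J = ⊤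

/-- `R` is a strongly harmonic ring: for distinct maximal two-sided ideals `𝔐, 𝔑` there are
ideals `I ⊄ 𝔐`, `J ⊄ 𝔑` with `JI = 0`. -/
def StronglyHarmonicRing (R : Type*) [Ring R] : Prop :=
  ∀ I J : Submodule R R, IsMaxTS I → IsMaxTS J → I ≠ J →
    ∃ I' J' : Submodule R R, IsTwoSidedI I' ∧ IsTwoSidedI J' ∧
      ¬ I' ≤ I ∧ ¬ J' ≤ J ∧ IProd J' I' = ⊥

/-- The lattice of two-sided ideals of `R` is normal. -/
def TSNormal (R : Type*) [Ring R] : Prop :=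
  ∀ I J : Submodule R R, IsTwoSidedI I → IsTwoSidedI J → I ⊔ J = ⊤ →
    ∃ I' J' : Submodule R R, IsTwoSidedI I' ∧ IsTwoSidedI J' ∧
      I ⊔ J' = ⊤ ∧ I' ⊔ J = ⊤ ∧ IProd I' J' = ⊥

theorem eq_top_of_one_mem {I : Submodule R R} (h : (1 : R) ∈ I) : I = ⊤ :=
  (Ideal.eq_top_iff_one I).2 h

theorem IsTwoSidedI.sup {I J : Submodule R R} (hI : IsTwoSidedI I) (hJ : IsTwoSidedI J) :
    IsTwoSidedI (I ⊔ J) := by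
  intro a ha r
  obtain ⟨x, hx, y, hy, rfl⟩ := Submodule.mem_sup.1 ha
  rw [add_mul]
  exact Submodule.add_mem_sup (hI x hx r) (hJ y hy r)

theorem IsTwoSidedI.inf {I J : Submodule R R} (hI : IsTwoSidedI I) (hJ : IsTwoSidedI J) :
    IsTwoSidedI (I ⊓ J) :=
  fun a ha r => ⟨hI a ha.1 r, hJ a ha.2 r⟩

/-- If `1 = a + k` and `1 = b + l` with `k, l ∈ K`, then `1 = a b + (a l + k)`. -/
theorem sup_inf_eq_top {A B K : Submodule R R} (hA : IsTwoSidedI A)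
    (h₁ : A ⊔ K = ⊤) (h₂ : B ⊔ K = ⊤) : (A ⊓ B) ⊔ K = ⊤ := by
  apply eq_top_of_one_mem
  have m₁ : (1 : R) ∈ A ⊔ K := h₁ ▸ Submodule.mem_top
  have m₂ : (1 : R) ∈ B ⊔ K := h₂ ▸ Submodule.mem_top
  obtain ⟨a, ha, k, hk, e₁⟩ := Submodule.mem_sup.1 m₁
  obtain ⟨b, hb, l, hl, e₂⟩ := Submodule.mem_sup.1 m₂
  refine Submodule.mem_sup.2 ⟨a * b, ⟨hA a ha b, B.smul_mem a hb⟩, a * l + k,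
    K.add_mem (K.smul_mem a hl) hk, ?_⟩
  rw [← add_assoc, ← mul_add, e₂, mul_one, e₁]

/-- Zorn's lemma for two-sided ideals avoiding `1`. -/
theorem exists_le_isMaxTS {I : Submodule R R} (hI : IsTwoSidedI I) (hne : I ≠ ⊤) :
    ∃ M, IsMaxTS M ∧ I ≤ M := by
  obtain ⟨M, hIM, hM⟩ := zorn_le_nonempty₀ {J : Submodule R R | IsTwoSidedI J ∧ (1 : R) ∉ J}
    (fun c hc hch y hy => by
      have key : ∀ {z : R}, z ∈ sSup c ↔ ∃ J ∈ c, z ∈ J :=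
        Submodule.mem_sSup_of_directed ⟨y, hy⟩ hch.directedOn
      refine ⟨sSup c, ⟨fun a ha r => ?_, fun h => ?_⟩, fun z hz => le_sSup hz⟩
      · obtain ⟨J, hJ, haJ⟩ := key.1 ha
        exact key.2 ⟨J, hJ, (hc hJ).1 a haJ r⟩
      · obtain ⟨J, hJ, hJ1⟩ := key.1 h
        exact (hc hJ).2 hJ1)
    I ⟨hI, fun h => hne (eq_top_of_one_mem h)⟩
  refine ⟨M, ⟨hM.prop.1, fun h => hM.prop.2 (h ▸ Submodule.mem_top), fun J hJ hlt => ?_⟩, hIM⟩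
  by_contra hJt
  exact hlt.not_ge (hM.le_of_ge ⟨hJ, fun h => hJt (eq_top_of_one_mem h)⟩ hlt.le)

theorem IsMaxTS.sup_eq_top {M A : Submodule R R} (hM : IsMaxTS M) (hA : IsTwoSidedI A)
    (h : ¬ A ≤ M) : A ⊔ M = ⊤ :=
  hM.2.2 _ (hA.sup hM.1) (right_lt_sup.2 h)

theorem iProd_eq_bot_iff {I J : Submodule R R} :
    IProd I J = ⊥ ↔ ∀ a ∈ I, ∀ b ∈ J, a * b = 0 := by
  rw [IProd, Submodule.span_eq_bot]
  constructor
  · intro h a ha b hb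
    exact h _ ⟨a, ha, b, hb, rfl⟩
  · rintro h _ ⟨a, ha, b, hb, rfl⟩
    exact h a ha b hb

/-- The left annihilator `{b | b A = 0}` of a left ideal `A`. -/
def leftAnn (A : Submodule R R) : Submodule R R where
  carrier := {b | ∀ a ∈ A, b * a = 0}
  zero_mem' := fun a _ => zero_mul a
  add_mem' := fun hx hy a ha => by rw [add_mul, hx a ha, hy a ha, add_zero]
  smul_mem' := fun r x hx a ha => by rw [smul_eq_mul, mul_assoc, hx a ha, mul_zero]

theorem isTwoSidedI_leftAnn (A : Submodule R R) : IsTwoSidedI (leftAnn A) := by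
  intro b hb r a ha
  rw [mul_assoc]
  exact hb _ (A.smul_mem r ha)

/-- The right annihilator `{a | B a = 0}` of `B`; it is a left ideal because `B` is closed under
right multiplication. -/
def rightAnn (B : Submodule R R) (hB : IsTwoSidedI B) : Submodule R R where
  carrier := {a | ∀ b ∈ B, b * a = 0}
  zero_mem' := fun b _ => mul_zero b
  add_mem' := fun hx hy b hb => by rw [mul_add, hx b hb, hy b hb, add_zero]
  smul_mem' := fun r x hx b hb => by rw [smul_eq_mul, ← mul_assoc, hx _ (hB b hb r)]

theorem isTwoSidedI_rightAnn (B : Submodule R R) (hB : IsTwoSidedI B) :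
    IsTwoSidedI (rightAnn B hB) := by
  intro a ha r b hb
  rw [← mul_assoc, ha b hb, zero_mul]

/-- The ideal of all `b` with `b A = 0` for some two-sided ideal `A` comaximal with `K`. -/
def leftLocal (K : Submodule R R) : Submodule R R where
  carrier := {b | ∃ A : Submodule R R, IsTwoSidedI A ∧ A ⊔ K = ⊤ ∧ b ∈ leftAnn A}
  zero_mem' := ⟨⊤, fun _ _ _ => Submodule.mem_top, top_sup_eq K, Submodule.zero_mem _⟩
  add_mem' := by
    rintro x y ⟨A, hA, hAK, hx⟩ ⟨B, hB, hBK, hy⟩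
    exact ⟨A ⊓ B, hA.inf hB, sup_inf_eq_top hA hAK hBK,
      Submodule.add_mem _ (fun a ha => hx a ha.1) (fun a ha => hy a ha.2)⟩
  smul_mem' := by
    rintro r x ⟨A, hA, hAK, hx⟩
    exact ⟨A, hA, hAK, Submodule.smul_mem _ r hx⟩

theorem isTwoSidedI_leftLocal (K : Submodule R R) :
    IsTwoSidedI (leftLocal K) := by
  rintro b ⟨A, hA, hAK, hb⟩ r
  exact ⟨A, hA, hAK, isTwoSidedI_leftAnn A b hb r⟩

/-- The ideal of all `a` with `B a = 0` for some two-sided ideal `B` comaximal with `K`. -/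
def rightLocal (K : Submodule R R) : Submodule R R where
  carrier := {a | ∃ (B : Submodule R R) (hB : IsTwoSidedI B), B ⊔ K = ⊤ ∧ a ∈ rightAnn B hB}
  zero_mem' := ⟨⊤, fun _ _ _ => Submodule.mem_top, top_sup_eq K, Submodule.zero_mem _⟩
  add_mem' := by
    rintro x y ⟨A, hA, hAK, hx⟩ ⟨B, hB, hBK, hy⟩
    exact ⟨A ⊓ B, hA.inf hB, sup_inf_eq_top hA hAK hBK,
      Submodule.add_mem _ (fun a ha => hx a ha.1) (fun a ha => hy a ha.2)⟩
  smul_mem' := by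
    rintro r x ⟨A, hA, hAK, hx⟩
    exact ⟨A, hA, hAK, Submodule.smul_mem _ r hx⟩

theorem isTwoSidedI_rightLocal (K : Submodule R R) :
    IsTwoSidedI (rightLocal K) := by
  rintro a ⟨B, hB, hBK, ha⟩ r
  exact ⟨B, hB, hBK, isTwoSidedI_rightAnn B hB a ha r⟩

/-- Separation of a maximal ideal `M` from a whole ideal `J ⊄ M`. -/
theorem leftLocal_sup_eq_top (h : StronglyHarmonicRing R) {M J : Submodule R R}
    (hM : IsMaxTS M) (hJ : IsTwoSidedI J) (hJM : ¬ J ≤ M) : leftLocal M ⊔ J = ⊤ := by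
  by_contra hne
  obtain ⟨N, hN, hle⟩ := exists_le_isMaxTS ((isTwoSidedI_leftLocal M).sup hJ) hne
  have hMN : M ≠ N := by
    rintro rfl
    exact hJM (le_sup_right.trans hle)
  obtain ⟨A, B, hA, -, hAM, hBN, hBA⟩ := h M N hM hN hMN
  refine hBN (le_trans (fun b hb => ?_) (le_sup_left.trans hle))
  exact ⟨A, hA, hM.sup_eq_top hA hAM, fun a ha => iProd_eq_bot_iff.1 hBA b hb a ha⟩

theorem rightLocal_sup_eq_top (h : StronglyHarmonicRing R) {I J : Submodule R R}
    (hI : IsTwoSidedI I) (hJ : IsTwoSidedI J) (hIJ : I ⊔ J = ⊤) : rightLocal J ⊔ I = ⊤ := by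
  by_contra hne
  obtain ⟨M, hM, hle⟩ := exists_le_isMaxTS ((isTwoSidedI_rightLocal J).sup hI) hne
  have hJM : ¬ J ≤ M := fun hJM =>
    hM.2.1 (top_le_iff.1 (hIJ ▸ sup_le (le_sup_right.trans hle) hJM))
  have m : (1 : R) ∈ leftLocal M ⊔ J := by
    rw [leftLocal_sup_eq_top h hM hJ hJM]
    exact Submodule.mem_top
  obtain ⟨b, ⟨A, hA, hAM, hb⟩, j, hj, e⟩ := Submodule.mem_sup.1 m
  -- `b` witnesses that the left annihilator of `A` is comaximal with `J`.
  have hann : leftAnn A ⊔ J = ⊤ := eq_top_of_one_mem (Submodule.mem_sup.2 ⟨b, hb, j, hj, e⟩)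
  have hAle : A ≤ M := by
    refine le_trans (fun a ha => ?_) (le_sup_left.trans hle)
    exact ⟨leftAnn A, isTwoSidedI_leftAnn A, hann, fun x hx => hx a ha⟩
  exact hM.2.1 (by rwa [sup_eq_right.2 hAle] at hAM)

/-- For any ring `R`, the lattice of two-sided ideals of `R` is normal iff
`R` is a strongly harmonic ring. -/
theorem tsNormal_iff_stronglyHarmonicRing :
    TSNormal R ↔ StronglyHarmonicRing R := by
  constructor
  · intro h M N hM hN hMN
    have hsup : M ⊔ N = ⊤ := by
      refine hN.sup_eq_top hM.1 fun hle => hN.2.1 ?_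
      exact hM.2.2 N hN.1 (lt_of_le_of_ne hle hMN)
    obtain ⟨A, B, hA, hB, hMB, hAN, hAB⟩ := h M N hM.1 hN.1 hsup
    refine ⟨B, A, hB, hA, fun hle => hM.2.1 ?_, fun hle => hN.2.1 ?_, hAB⟩
    · rwa [sup_eq_left.2 hle] at hMB
    · rwa [sup_eq_right.2 hle] at hAN
  · intro h I J hI hJ hIJ
    have m : (1 : R) ∈ rightLocal J ⊔ I :=
      rightLocal_sup_eq_top h hI hJ hIJ ▸ Submodule.mem_top
    obtain ⟨a, ⟨B, hB, hBJ, ha⟩, i, hi, e⟩ := Submodule.mem_sup.1 m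
    refine ⟨B, rightAnn B hB, hB, isTwoSidedI_rightAnn B hB, ?_, hBJ,
      iProd_eq_bot_iff.2 fun b hb x hx => hx b hb⟩
    rw [sup_comm]
    exact eq_top_of_one_mem (Submodule.mem_sup.2 ⟨a, ha, i, hi, e⟩)
end
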